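/- arXiv:0908.1328 — 3 statements merged into one kernel-verified Lean document; each statement's English description precedes it below -/
import Mathlib

section
/- For all natural numbers n ≥ 1 and real parameters a, b, x (with nonzero denominators), the derivatives of the monic Jacobi polynomials satisfy x·(P_n^{(a,b)})'(x) = (n/(n+1))·(P_{n+1}^{(a,b)})'(x) − ((a+2+b)(a−b)/((2n+2+a+b)(2n+a+b)))·(P_n^{(a,b)})'(x) + (4n(b+n)(a+n)(n+a+b+1)/((2n+a+b+1)(2n+a+b−1)(2n+a+b)²))·(P_{n-1}^{(a,b)})'(x). -/
/-- Rising factorial `(a)_k = a(a+1)⋯(a+k-1)`. -/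
noncomputable def rf (a : ℝ) (k : ℕ) : ℝ := ∏ j ∈ Finset.range k, (a + j)

/-- Monic Jacobi polynomials
`P_n^{(a,b)}(x) = ((a+1)_n 2^n / (n+a+b+1)_n) ∑_{k=0}^n
  ((-n)_k (n+a+b+1)_k / ((a+1)_k k!)) ((1-x)/2)^k`. -/
noncomputable def jacobi (a b : ℝ) (n : ℕ) (x : ℝ) : ℝ :=
  rf (a + 1) n * 2 ^ n / rf ((n : ℝ) + a + b + 1) n *
    ∑ k ∈ Finset.range (n + 1),
      rf (-(n : ℝ)) k * rf ((n : ℝ) + a + b + 1) k / (rf (a + 1) k * (k.factorial : ℝ)) *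
        ((1 - x) / 2) ^ k

/-- Derivative of the monic Jacobi polynomial with respect to `x`. -/
noncomputable def jacobiDeriv (a b : ℝ) (n : ℕ) (x : ℝ) : ℝ := deriv (jacobi a b n) x

/-!
Differentiation shifts the parameters, `d/dx P_n^{(a,b)} = n P_{n-1}^{(a+1,b+1)}`, so the claim is
`n` times the three-term recurrence `x P_m = P_{m+1} + β_m P_m + γ_m P_{m-1}` at `m = n - 1` for the
parameters `(a+1,b+1)`. To prove the recurrence, put `y = (1-x)/2`, so that `x P_m = P_m - 2 y P_m`.
In each of `P_m`, `y P_m` and `γ_m P_{m-1}` the coefficient of `y^k` is an explicit rational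
multiple of that of `P_{m+1}`, which leaves a single identity between rational functions of
`m, k, a, b`.
-/

section RisingFactorial

lemma rf_succ (a : ℝ) (k : ℕ) : rf a (k + 1) = rf a k * (a + k) :=
  Finset.prod_range_succ _ _

lemma rf_succ_left (a : ℝ) (k : ℕ) : rf a (k + 1) = a * rf (a + 1) k := by
  simp only [rf, Finset.prod_range_succ', Nat.cast_zero, add_zero, mul_comm a, Nat.cast_add,
    Nat.cast_one, add_right_comm, add_assoc]

lemma mul_rf_add_one (a : ℝ) (k : ℕ) : a * rf (a + 1) k = rf a k * (a + k) := by
  rw [← rf_succ_left, rf_succ]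

lemma rf_neg_natCast_eq_zero {n k : ℕ} (h : n < k) : rf (-(n : ℝ)) k = 0 :=
  Finset.prod_eq_zero (Finset.mem_range.2 h) (neg_add_cancel _)

lemma rf_ne_zero_iff {a : ℝ} {k : ℕ} : rf a k ≠ 0 ↔ ∀ j < k, a + j ≠ 0 := by
  simp only [rf, Finset.prod_ne_zero_iff, Finset.mem_range]

lemma ne_zero_of_rf_ne_zero {a t : ℝ} {k : ℕ} (h : rf a k ≠ 0) (j : ℕ) (hj : j < k)
    (ht : a + j = t) : t ≠ 0 :=
  ht ▸ rf_ne_zero_iff.1 h j hj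

end RisingFactorial

/-- The factor `(a+1)_n 2^n / (n+a+b+1)_n` that makes the Jacobi polynomial monic. -/
noncomputable def jacobiLead (a b : ℝ) (n : ℕ) : ℝ :=
  rf (a + 1) n * 2 ^ n / rf ((n : ℝ) + a + b + 1) n

/-- The coefficient of `((1-x)/2)^k` in the monic Jacobi polynomial `P_n^{(a,b)}(x)`; it is
zero for `k > n`. -/
noncomputable def jacobiCoeff (a b : ℝ) (n k : ℕ) : ℝ :=
  jacobiLead a b n *
    (rf (-(n : ℝ)) k * rf ((n : ℝ) + a + b + 1) k / (rf (a + 1) k * (k.factorial : ℝ)))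

section Coefficients

variable {a b : ℝ} {n k : ℕ}

lemma jacobiCoeff_eq_zero (h : n < k) : jacobiCoeff a b n k = 0 := by
  simp only [jacobiCoeff, rf_neg_natCast_eq_zero h, zero_mul, zero_div, mul_zero]

lemma jacobi_eq_sum {N : ℕ} (h : n ≤ N) (x : ℝ) :
    jacobi a b n x =
      ∑ k ∈ Finset.range (N + 1), jacobiCoeff a b n k * ((1 - x) / 2) ^ k := by
  have hsum : jacobi a b n x =
      ∑ k ∈ Finset.range (n + 1), jacobiCoeff a b n k * ((1 - x) / 2) ^ k := by
    simp only [jacobi, jacobiCoeff, jacobiLead, Finset.mul_sum, mul_assoc]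
  rw [hsum]
  refine Finset.sum_subset (Finset.range_mono (by omega)) fun k _ hk => ?_
  rw [jacobiCoeff_eq_zero (by simpa using hk), zero_mul]

lemma jacobiLead_succ (hab : rf (n + a + b + 1) (n + 2) ≠ 0) :
    (2 * n + a + b + 1) * (2 * n + a + b + 2) * jacobiLead a b (n + 1) =
      2 * (a + 1 + n) * (n + a + b + 1) * jacobiLead a b n := by
  have hcast : ((n + 1 : ℕ) : ℝ) + a + b + 1 = n + a + b + 1 + 1 := by push_cast; ring
  have hden : (n + a + b + 1) * rf (n + a + b + 1 + 1) (n + 1) =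
      rf (n + a + b + 1) n * ((2 * n + a + b + 1) * (2 * n + a + b + 2)) := by
    rw [mul_rf_add_one, rf_succ]
    push_cast
    ring
  have hn : rf (n + a + b + 1) n ≠ 0 :=
    rf_ne_zero_iff.2 fun j hj => rf_ne_zero_iff.1 hab j (by omega)
  have hn' : rf (n + a + b + 1 + 1) (n + 1) ≠ 0 :=
    right_ne_zero_of_mul (rf_succ_left _ (n + 1) ▸ hab)
  rw [jacobiLead, jacobiLead, hcast, rf_succ (a + 1), mul_div_assoc', mul_div_assoc',
    div_eq_div_iff hn' hn]
  linear_combination (-2 * 2 ^ n * rf (a + 1) n * (a + 1 + n)) * hden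

lemma jacobiCoeff_succ_left (hab : rf (n + a + b + 1) (n + 2) ≠ 0) :
    (n + 1 - k) * (2 * n + a + b + 1) * (2 * n + a + b + 2) * jacobiCoeff a b (n + 1) k =
      2 * (n + 1) * (a + 1 + n) * (n + a + b + 1 + k) * jacobiCoeff a b n k := by
  have hneg : (n + 1 - k) * rf (-((n + 1 : ℕ) : ℝ)) k = (n + 1) * rf (-(n : ℝ)) k := by
    have h := mul_rf_add_one (-((n + 1 : ℕ) : ℝ)) k
    rw [show -((n + 1 : ℕ) : ℝ) + 1 = -n by push_cast; ring] at h
    push_cast at h ⊢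
    linear_combination h
  have hpos : (n + a + b + 1) * rf (((n + 1 : ℕ) : ℝ) + a + b + 1) k =
      rf (n + a + b + 1) k * (n + a + b + 1 + k) := by
    rw [← mul_rf_add_one]
    push_cast
    ring_nf
  simp only [jacobiCoeff, div_eq_mul_inv]
  generalize (rf (a + 1) k * (k.factorial : ℝ))⁻¹ = d
  calc
    _ = ((n + 1 - k) * rf (-((n + 1 : ℕ) : ℝ)) k) *
          ((2 * n + a + b + 1) * (2 * n + a + b + 2) * jacobiLead a b (n + 1)) *
          rf (((n + 1 : ℕ) : ℝ) + a + b + 1) k * d := by ring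
    _ = 2 * (n + 1) * (a + 1 + n) * rf (-(n : ℝ)) k * jacobiLead a b n *
          ((n + a + b + 1) * rf (((n + 1 : ℕ) : ℝ) + a + b + 1) k) * d := by
        rw [hneg, jacobiLead_succ hab]; ring
    _ = _ := by rw [hpos]; ring

lemma jacobiCoeff_succ_succ (ha : a + 1 + k ≠ 0) (hab : rf (n + a + b + 1) (n + 2) ≠ 0) :
    (k + 1) * (a + 1 + k) * (2 * n + a + b + 1) * (2 * n + a + b + 2) *
        jacobiCoeff a b (n + 1) (k + 1) =
      -(2 * (n + 1) * (a + 1 + n) * (n + a + b + 1 + k) * (n + a + b + 2 + k)) *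
        jacobiCoeff a b n k := by
  have hneg : rf (-((n + 1 : ℕ) : ℝ)) (k + 1) = -(n + 1) * rf (-(n : ℝ)) k := by
    rw [rf_succ_left]
    push_cast
    ring_nf
  have hpos : (n + a + b + 1) * rf (((n + 1 : ℕ) : ℝ) + a + b + 1) (k + 1) =
      rf (n + a + b + 1) k * (n + a + b + 1 + k) * (n + a + b + 2 + k) := by
    rw [show ((n + 1 : ℕ) : ℝ) + a + b + 1 = n + a + b + 1 + 1 by push_cast; ring,
      mul_rf_add_one, rf_succ]
    push_cast
    ring
  have hden : (k + 1) * (a + 1 + k) * (rf (a + 1) (k + 1) * ((k + 1).factorial : ℝ))⁻¹ =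
      (rf (a + 1) k * (k.factorial : ℝ))⁻¹ := by
    have hk : (k : ℝ) + 1 ≠ 0 := by positivity
    rw [rf_succ, Nat.factorial_succ]
    push_cast
    field_simp
  simp only [jacobiCoeff, div_eq_mul_inv, ← hden]
  generalize (rf (a + 1) (k + 1) * ((k + 1).factorial : ℝ))⁻¹ = d
  calc
    _ = (k + 1) * (a + 1 + k) * rf (-((n + 1 : ℕ) : ℝ)) (k + 1) *
          ((2 * n + a + b + 1) * (2 * n + a + b + 2) * jacobiLead a b (n + 1)) *
          rf (((n + 1 : ℕ) : ℝ) + a + b + 1) (k + 1) * d := by ring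
    _ = -(2 * (n + 1) * (a + 1 + n)) * rf (-(n : ℝ)) k * jacobiLead a b n *
          ((n + a + b + 1) * rf (((n + 1 : ℕ) : ℝ) + a + b + 1) (k + 1)) *
          ((k + 1) * (a + 1 + k) * d) := by rw [hneg, jacobiLead_succ hab]; ring
    _ = _ := by rw [hpos]; ring

end Coefficients

section Derivative

variable {a b : ℝ} {n : ℕ}

lemma jacobiLead_succ_shift (hab : (n : ℝ) + a + b + 2 ≠ 0) :
    (n + a + b + 2) * jacobiLead a b (n + 1) =
      2 * (a + 1) * jacobiLead (a + 1) (b + 1) n := by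
  simp only [jacobiLead, rf_succ_left]
  rw [show ((n + 1 : ℕ) : ℝ) + a + b + 1 = n + a + b + 2 by push_cast; ring,
    show (n : ℝ) + (a + 1) + (b + 1) + 1 = n + a + b + 2 + 1 by ring]
  field_simp
  ring

lemma jacobiCoeff_succ_succ_shift (ha : a + 1 ≠ 0) (hab : (n : ℝ) + a + b + 2 ≠ 0) (k : ℕ) :
    (k + 1) * jacobiCoeff a b (n + 1) (k + 1) =
      -2 * (n + 1) * jacobiCoeff (a + 1) (b + 1) n k := by
  have hk : (k : ℝ) + 1 ≠ 0 := by positivity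
  simp only [jacobiCoeff, rf_succ_left, Nat.factorial_succ]
  rw [show ((n + 1 : ℕ) : ℝ) + a + b + 1 = n + a + b + 2 by push_cast; ring,
    show -((n + 1 : ℕ) : ℝ) + 1 = -n by push_cast; ring,
    show (n : ℝ) + (a + 1) + (b + 1) + 1 = n + a + b + 2 + 1 by ring]
  have hlead : jacobiLead a b (n + 1) =
      2 * (a + 1) * jacobiLead (a + 1) (b + 1) n / (n + a + b + 2) := by
    rw [eq_div_iff hab, mul_comm, jacobiLead_succ_shift hab]
  rw [hlead]
  push_cast
  field_simp

theorem hasDerivAt_jacobi (ha : a + 1 ≠ 0) (hab : rf (n + a + b + 1) n ≠ 0) (x : ℝ) :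
    HasDerivAt (jacobi a b n) (n * jacobi (a + 1) (b + 1) (n - 1) x) x := by
  have hsum : jacobi a b n =
      fun x => ∑ k ∈ Finset.range (n + 1), jacobiCoeff a b n k * ((1 - x) / 2) ^ k :=
    funext (jacobi_eq_sum le_rfl)
  have hy : HasDerivAt (fun x : ℝ => (1 - x) / 2) (-1 / 2) x :=
    ((hasDerivAt_id x).const_sub 1).div_const 2
  rw [hsum]
  refine (HasDerivAt.fun_sum fun k _ => (hy.fun_pow k).const_mul _).congr_deriv ?_
  rw [Finset.sum_range_succ', Nat.cast_zero, zero_mul, zero_mul, mul_zero, add_zero]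
  cases n with
  | zero => simp only [Finset.range_zero, Finset.sum_empty, Nat.cast_zero, zero_mul]
  | succ m =>
    have hm : (m : ℝ) + a + b + 2 ≠ 0 :=
      ne_zero_of_rf_ne_zero hab 0 m.succ_pos (by push_cast; ring)
    rw [Nat.add_sub_cancel, jacobi_eq_sum le_rfl, Finset.mul_sum]
    refine Finset.sum_congr rfl fun k _ => ?_
    have hcoeff := jacobiCoeff_succ_succ_shift ha hm k
    rw [Nat.add_sub_cancel]
    push_cast
    linear_combination (-1 / 2 * ((1 - x) / 2) ^ k) * hcoeff

end Derivative

/-- The coefficient of `P_n` in the three-term recurrence of the monic Jacobi polynomials, that is,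
the `n`-th diagonal entry of their Jacobi matrix. -/
noncomputable def jacobiDiag (a b : ℝ) (n : ℕ) : ℝ :=
  (b ^ 2 - a ^ 2) / ((2 * n + a + b) * (2 * n + a + b + 2))

/-- The coefficient of `P_{n-1}` in the three-term recurrence of the monic Jacobi polynomials. It
vanishes for `n = 0`, where the index `n - 1` is truncated. -/
noncomputable def jacobiOffDiag (a b : ℝ) (n : ℕ) : ℝ :=
  4 * n * (n + a) * (n + b) * (n + a + b) /
    ((2 * n + a + b - 1) * (2 * n + a + b) ^ 2 * (2 * n + a + b + 1))

section Recurrence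

variable {a b : ℝ} {n k : ℕ}

lemma jacobiCoeff_eq_mul_succ_left (ha : a + 1 + n ≠ 0)
    (hab : rf (n + a + b + 1) (n + 2) ≠ 0) (hk : k ≤ n + 1) :
    jacobiCoeff a b n k = (n + 1 - k) * (2 * n + a + b + 1) * (2 * n + a + b + 2) /
      (2 * (n + 1) * (a + 1 + n) * (n + a + b + 1 + k)) * jacobiCoeff a b (n + 1) k := by
  have hn : (n : ℝ) + 1 ≠ 0 := by positivity
  have hnk := rf_ne_zero_iff.1 hab k (by omega)
  have h := jacobiCoeff_succ_left (k := k) hab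
  rw [div_mul_eq_mul_div, eq_div_iff (by simp [*])]
  linear_combination -h

lemma jacobiCoeff_eq_mul_succ_succ (ha : rf (a + 1) (n + 1) ≠ 0)
    (hab : rf (n + a + b + 1) (n + 2) ≠ 0) (hk : k ≤ n) :
    jacobiCoeff a b n k =
      -((k + 1) * (a + 1 + k) * (2 * n + a + b + 1) * (2 * n + a + b + 2)) /
        (2 * (n + 1) * (a + 1 + n) * (n + a + b + 1 + k) * (n + a + b + 2 + k)) *
          jacobiCoeff a b (n + 1) (k + 1) := by
  have hn : (n : ℝ) + 1 ≠ 0 := by positivity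
  have han := rf_ne_zero_iff.1 ha n (by omega)
  have hnk := rf_ne_zero_iff.1 hab k (by omega)
  have hnk' : (n : ℝ) + a + b + 2 + k ≠ 0 :=
    ne_zero_of_rf_ne_zero hab (k + 1) (by omega) (by push_cast; ring)
  have h := jacobiCoeff_succ_succ (rf_ne_zero_iff.1 ha k (by omega)) hab
  rw [div_mul_eq_mul_div, eq_div_iff (by simp [*])]
  linear_combination h

lemma half_one_sub_mul_jacobi (ha : rf (a + 1) (n + 1) ≠ 0)
    (hab : rf (n + a + b + 1) (n + 2) ≠ 0) (x : ℝ) :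
    (1 - x) / 2 * jacobi a b n x = ∑ k ∈ Finset.range (n + 2),
      -(k * (a + k) * (2 * n + a + b + 1) * (2 * n + a + b + 2)) /
        (2 * (n + 1) * (a + 1 + n) * (n + a + b + k) * (n + a + b + 1 + k)) *
          jacobiCoeff a b (n + 1) k * ((1 - x) / 2) ^ k := by
  rw [Finset.sum_range_succ', jacobi_eq_sum le_rfl, Finset.mul_sum]
  simp only [Nat.cast_zero, zero_mul, neg_zero, zero_div, add_zero]
  refine Finset.sum_congr rfl fun k hk => ?_
  rw [jacobiCoeff_eq_mul_succ_succ ha hab (by simpa [Nat.lt_succ_iff] using hk)]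
  push_cast
  ring

lemma jacobiOffDiag_mul_jacobiCoeff_pred (hab : rf (n + a + b) (n + 2) ≠ 0) (hk : k ≤ n + 1) :
    jacobiOffDiag a b n * jacobiCoeff a b (n - 1) k =
      2 * (n - k) * (n + b) * (n + a + b) /
        ((2 * n + a + b) * (2 * n + a + b + 1) * (n + a + b + k)) * jacobiCoeff a b n k := by
  cases n with
  | zero =>
    rcases k.eq_zero_or_pos with rfl | hk0
    · simp only [jacobiOffDiag, Nat.cast_zero, sub_zero, mul_zero, zero_mul, zero_div]
    · rw [jacobiCoeff_eq_zero hk0, mul_zero, mul_zero]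
  | succ m =>
    have hnk := rf_ne_zero_iff.1 hab k (by omega)
    have hs_sub_one : 2 * ((m + 1 : ℕ) : ℝ) + a + b - 1 ≠ 0 :=
      ne_zero_of_rf_ne_zero hab m (by omega) (by push_cast; ring)
    have hs : 2 * ((m + 1 : ℕ) : ℝ) + a + b ≠ 0 :=
      ne_zero_of_rf_ne_zero hab (m + 1) (by omega) (by push_cast; ring)
    have hs_add_one : 2 * ((m + 1 : ℕ) : ℝ) + a + b + 1 ≠ 0 :=
      ne_zero_of_rf_ne_zero hab (m + 2) (by omega) (by push_cast; ring)
    have hm : rf (m + a + b + 1) (m + 2) ≠ 0 := rf_ne_zero_iff.2 fun j hj =>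
      ne_zero_of_rf_ne_zero hab j (by omega) (by push_cast; ring)
    have hpred := jacobiCoeff_succ_left (k := k) hm
    rw [jacobiOffDiag, Nat.add_sub_cancel, div_mul_eq_mul_div, div_mul_eq_mul_div,
      div_eq_div_iff (mul_ne_zero (mul_ne_zero hs_sub_one (pow_ne_zero 2 hs)) hs_add_one)
        (mul_ne_zero (mul_ne_zero hs hs_add_one) hnk)]
    push_cast at hpred ⊢
    linear_combination (-2 * (m + 1 + b) * (m + 1 + a + b) * (2 * (m + 1) + a + b) *
      (2 * (m + 1) + a + b + 1)) * hpred

lemma jacobiCoeff_three_term (ha : a + 1 + n ≠ 0) (hab : rf (n + a + b) (n + 3) ≠ 0)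
    (hk : k ≤ n + 1) :
    jacobiCoeff a b n k -
        2 * (-(k * (a + k) * (2 * n + a + b + 1) * (2 * n + a + b + 2)) /
          (2 * (n + 1) * (a + 1 + n) * (n + a + b + k) * (n + a + b + 1 + k)) *
            jacobiCoeff a b (n + 1) k) =
      jacobiCoeff a b (n + 1) k + jacobiDiag a b n * jacobiCoeff a b n k +
        jacobiOffDiag a b n * jacobiCoeff a b (n - 1) k := by
  have hn : (n : ℝ) + 1 ≠ 0 := by positivity
  have hshift : (n : ℝ) + a + b + 1 + k = n + a + b + k + 1 := by ring
  have hnk : (n : ℝ) + a + b + k ≠ 0 := rf_ne_zero_iff.1 hab k (by omega)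
  have hnk' : (n : ℝ) + a + b + k + 1 ≠ 0 :=
    ne_zero_of_rf_ne_zero hab (k + 1) (by omega) (by push_cast; ring)
  have hs : 2 * (n : ℝ) + a + b ≠ 0 := ne_zero_of_rf_ne_zero hab n (by omega) (by ring)
  have hs_add_one : 2 * (n : ℝ) + a + b + 1 ≠ 0 :=
    ne_zero_of_rf_ne_zero hab (n + 1) (by omega) (by push_cast; ring)
  have hs_add_two : 2 * (n : ℝ) + a + b + 2 ≠ 0 :=
    ne_zero_of_rf_ne_zero hab (n + 2) (by omega) (by push_cast; ring)
  rw [jacobiOffDiag_mul_jacobiCoeff_pred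
      (left_ne_zero_of_mul (rf_succ _ (n + 2) ▸ hab)) hk,
    jacobiCoeff_eq_mul_succ_left ha (right_ne_zero_of_mul (rf_succ_left _ (n + 2) ▸ hab)) hk,
    jacobiDiag, hshift]
  generalize hs_eq : 2 * (n : ℝ) + a + b = s at *
  generalize hp_eq : (n : ℝ) + a + b + k = p at *
  field_simp
  subst hs_eq hp_eq
  ring

theorem mul_jacobi (ha : rf (a + 1) (n + 1) ≠ 0) (hab : rf (n + a + b) (n + 3) ≠ 0) (x : ℝ) :
    x * jacobi a b n x = jacobi a b (n + 1) x + jacobiDiag a b n * jacobi a b n x +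
      jacobiOffDiag a b n * jacobi a b (n - 1) x := by
  have hab' : rf (n + a + b + 1) (n + 2) ≠ 0 :=
    right_ne_zero_of_mul (rf_succ_left _ (n + 2) ▸ hab)
  calc
    x * jacobi a b n x = jacobi a b n x - 2 * ((1 - x) / 2 * jacobi a b n x) := by ring
    _ = _ := by
      rw [half_one_sub_mul_jacobi ha hab', jacobi_eq_sum n.le_succ, jacobi_eq_sum le_rfl,
        jacobi_eq_sum (by omega : n - 1 ≤ n + 1)]
      simp only [Finset.mul_sum, ← Finset.sum_sub_distrib, ← Finset.sum_add_distrib]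
      refine Finset.sum_congr rfl fun k hk => ?_
      have hcoeff := jacobiCoeff_three_term (rf_ne_zero_iff.1 ha n n.lt_succ_self) hab
        (Nat.lt_succ_iff.1 (Finset.mem_range.1 hk))
      linear_combination ((1 - x) / 2) ^ k * hcoeff

end Recurrence

theorem jacobi_deriv_three_term (n : ℕ) (hn : 1 ≤ n) (a b x : ℝ)
    (hpoch1 : ∀ k ≤ n + 1, rf (a + 1) k ≠ 0)
    (hpoch2 : ∀ m ≤ n + 1, rf ((m : ℝ) + a + b + 1) m ≠ 0)
    (h1 : 2 * (n : ℝ) + a + b ≠ 0) (h2 : 2 * (n : ℝ) + a + b + 1 ≠ 0)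
    (h3 : 2 * (n : ℝ) + a + b - 1 ≠ 0) (h4 : 2 * (n : ℝ) + 2 + a + b ≠ 0) :
    x * jacobiDeriv a b n x =
      ((n : ℝ) / (n + 1)) * jacobiDeriv a b (n + 1) x -
        ((a + 2 + b) * (a - b) / ((2 * n + 2 + a + b) * (2 * n + a + b))) *
          jacobiDeriv a b n x +
        (4 * n * (b + n) * (a + n) * (n + a + b + 1) /
            ((2 * n + a + b + 1) * (2 * n + a + b - 1) * (2 * n + a + b) ^ 2)) *
          jacobiDeriv a b (n - 1) x := by
  obtain ⟨m, rfl⟩ := Nat.exists_eq_add_of_le' hn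
  have ha : a + 1 ≠ 0 := ne_zero_of_rf_ne_zero (hpoch1 1 (by omega)) 0 one_pos (by simp)
  have hderiv : ∀ k ≤ m + 2, jacobiDeriv a b k x = k * jacobi (a + 1) (b + 1) (k - 1) x :=
    fun k hk => (hasDerivAt_jacobi ha (hpoch2 k hk) x).deriv
  have ha' : rf (a + 1 + 1) (m + 1) ≠ 0 :=
    right_ne_zero_of_mul (rf_succ_left (a + 1) (m + 1) ▸ hpoch1 (m + 2) le_rfl)
  have hab' : rf (m + (a + 1) + (b + 1)) (m + 3) ≠ 0 := by
    rw [rf_succ_left]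
    refine mul_ne_zero ?_ ?_
    · exact ne_zero_of_rf_ne_zero (hpoch2 (m + 1) (by omega)) 0 m.succ_pos (by push_cast; ring)
    · convert hpoch2 (m + 2) le_rfl using 2
      push_cast
      ring
  have hrec := mul_jacobi ha' hab' x
  have hcancel : ((m : ℝ) + 1) / (m + 1 + 1) * (m + 2) = m + 1 := by field_simp; ring
  rw [hderiv _ (by omega), hderiv _ le_rfl, hderiv _ (by omega)]
  simp only [jacobiDiag, jacobiOffDiag, Nat.add_sub_cancel] at hrec ⊢
  push_cast
  linear_combination (m + 1) * hrec - jacobi (a + 1) (b + 1) (m + 1) x * hcancel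
end

section
/- For all natural numbers n ≥ 1 and real parameters a, b, c, d and real θ (with all denominators nonzero), the (normalized) Wilson polynomials W_n(x²) with x² interpreted formally satisfy x²·W_n(x²) = α_n·W_{n+1}(x²) + β_n·W_n(x²) + γ_n·W_{n-1}(x²), where α_n = −(a+b+c+d+n−1)/((a+b+c+d+2n)(a+b+c+d+2n−1)), γ_n = −(a+b+n−1)(a+c+n−1)(a+d+n−1)(b+c+n−1)(b+d+n−1)(c+d+n−1)·n / ((a+b+c+d+2n−1)(a+b+c+d+2n−2)), and β_n = (4n² − 4(1−a−b−c−d)n + (a+b+c+d)² − 2(a²+b²+c²+d²))/8 + (a+b+c+d−2)(a+b−c−d)(a+c−b−d)(a+d−b−c)/(8(a+b+c+d+2n)(a+b+c+d+2n−2)). -/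
/-- The (normalized) Wilson polynomials evaluated at `x²`:
`W_n(x²) = (a+b)_n (a+c)_n (a+d)_n ∑_{k=0}^n
  ((-n)_k (n+a+b+c+d-1)_k ∏_{j=0}^{k-1}((a+j)²+x²)) / ((a+b)_k (a+c)_k (a+d)_k k!)`,
using `(a+ix)_k (a-ix)_k = ∏_{j=0}^{k-1}((a+j)² + x²)` for real `x`. -/
noncomputable def wilson (a b c d : ℝ) (n : ℕ) (x : ℝ) : ℝ :=
  rf (a + b) n * rf (a + c) n * rf (a + d) n *
    ∑ k ∈ Finset.range (n + 1),
      rf (-(n : ℝ)) k * rf ((n : ℝ) + a + b + c + d - 1) k *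
          (∏ j ∈ Finset.range k, ((a + j) ^ 2 + x ^ 2)) /
        (rf (a + b) k * rf (a + c) k * rf (a + d) k * (k.factorial : ℝ))

/-!
In the basis `φ_k(y) = ∏_{j<k} ((a+j)² + y)` the Wilson polynomial divided by
`(a+b)_n (a+c)_n (a+d)_n` is `S_n(y) = ∑_k c_n(k) φ_k(y)` with `c_n(0) = 1`. Here the degree `n` may
be any scalar `u` if the sum is truncated. Since `(a² + y) φ_k = φ_{k+1} - k (2a+k) φ_k`, the
recurrence `(a² + y) S_u = A_u (S_u - S_{u+1}) + C_u (S_u - S_{u-1})`, up to a truncation term which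
vanishes for `u = n`, reduces to an identity between coefficients. The contiguous relations express
the differences `c_u - c_{u±1}` at `k + 1` through `c_u(k)`, and what remains is the Lagrange
interpolation of a cubic in `k`.
-/

theorem rf_eq_eval_ascPochhammer (a : ℝ) (k : ℕ) : rf a k = (ascPochhammer ℝ k).eval a := by
  induction k with
  | zero => simp [rf]
  | succ k ih => rw [ascPochhammer_succ_eval, ← ih, rf, Finset.prod_range_succ, rf]

theorem ascPochhammer_succ_eval_left {S : Type*} [CommSemiring S] (a : S) (k : ℕ) :
    (ascPochhammer S (k + 1)).eval a = a * (ascPochhammer S k).eval (a + 1) := by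
  simp [ascPochhammer_succ_left]

section CommRing

variable {R : Type*} [CommRing R]

/-- The numerator `(-u)_k (u+s-1)_k` of the `k`-th coefficient of the Wilson polynomial of degree
`u` whose parameters have sum `s`. The degree is a scalar, so that `u ± 1` needs no case split. -/
noncomputable def wilsonNum (s u : R) (k : ℕ) : R :=
  (ascPochhammer R k).eval (-u) * (ascPochhammer R k).eval (u + s - 1)

theorem wilsonNum_succ (s u : R) (k : ℕ) :
    wilsonNum s u (k + 1) = wilsonNum s u k * ((k - u) * (u + s - 1 + k)) := by
  simp only [wilsonNum, ascPochhammer_succ_eval]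
  ring

theorem wilsonNum_natCast_eq_zero (s : R) {n k : ℕ} (h : n < k) : wilsonNum s n k = 0 := by
  rw [wilsonNum, ascPochhammer_eval_neg_coe_nat_of_lt h, zero_mul]

theorem wilsonNum_sub_wilsonNum_add_one (s u : R) (k : ℕ) :
    (u + s - 1) * (wilsonNum s u (k + 1) - wilsonNum s (u + 1) (k + 1)) =
      (s + 2 * u) * ((k + 1) * (u + s - 1 + k) * wilsonNum s u k) := by
  have hneg : (ascPochhammer R (k + 1)).eval (-(u + 1)) =
      -(u + 1) * (ascPochhammer R k).eval (-u) := by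
    rw [ascPochhammer_succ_eval_left, show -(u + 1) + 1 = -u by ring]
  have hshift : (u + s - 1) * (ascPochhammer R k).eval (u + s) =
      (ascPochhammer R k).eval (u + s - 1) * (u + s - 1 + k) := by
    rw [← ascPochhammer_succ_eval, ascPochhammer_succ_eval_left, sub_add_cancel]
  rw [wilsonNum_succ, wilsonNum, wilsonNum, hneg, show u + 1 + s - 1 = u + s by ring,
    ascPochhammer_succ_eval]
  linear_combination (u + 1) * (ascPochhammer R k).eval (-u) * (u + s + k) * hshift

theorem wilsonNum_one_sub_sub (s u : R) (k : ℕ) :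
    wilsonNum s (1 - s - u) k = wilsonNum s u k := by
  rw [wilsonNum, wilsonNum, mul_comm]
  congr 2 <;> ring

theorem wilsonNum_sub_wilsonNum_sub_one (s u : R) (k : ℕ) :
    u * (wilsonNum s u (k + 1) - wilsonNum s (u - 1) (k + 1)) =
      (s + 2 * u - 2) * ((k + 1) * (k - u) * wilsonNum s u k) := by
  have h := wilsonNum_sub_wilsonNum_add_one s (1 - s - u) k
  rw [show 1 - s - u + 1 = 1 - s - (u - 1) by ring] at h
  simp only [wilsonNum_one_sub_sub] at h
  linear_combination -h

/-- The normalizing factor `(a+b)_n (a+c)_n (a+d)_n` of the Wilson polynomials. -/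
noncomputable def wilsonScale (a b c d : R) (n : ℕ) : R :=
  (ascPochhammer R n).eval (a + b) * (ascPochhammer R n).eval (a + c) *
    (ascPochhammer R n).eval (a + d)

theorem wilsonScale_succ (a b c d : R) (n : ℕ) :
    wilsonScale a b c d (n + 1) =
      wilsonScale a b c d n * ((a + b + n) * (a + c + n) * (a + d + n)) := by
  simp only [wilsonScale, ascPochhammer_succ_eval]
  ring

/-- The denominator `(a+b)_k (a+c)_k (a+d)_k k!` of the coefficients of the Wilson polynomials. -/
noncomputable def wilsonDen (a b c d : R) (k : ℕ) : R :=
  wilsonScale a b c d k * (k.factorial : R)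

theorem wilsonDen_succ (a b c d : R) (k : ℕ) :
    wilsonDen a b c d (k + 1) =
      wilsonDen a b c d k * ((a + b + k) * (a + c + k) * (a + d + k) * (k + 1)) := by
  rw [wilsonDen, wilsonDen, wilsonScale_succ, Nat.factorial_succ]
  push_cast
  ring

/-- The polynomial `∏_{j<k} ((a+j)² + y)`, which is `(a+ix)_k (a-ix)_k` for `y = x²`. -/
def wilsonBasis (a y : R) (k : ℕ) : R := ∏ j ∈ Finset.range k, ((a + j) ^ 2 + y)

theorem wilsonBasis_succ (a y : R) (k : ℕ) :
    wilsonBasis a y (k + 1) = wilsonBasis a y k * ((a + k) ^ 2 + y) :=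
  Finset.prod_range_succ _ _

end CommRing

section Field

variable {K : Type*} [Field K]

/-- The `k`-th coefficient, in the basis `wilsonBasis`, of the Wilson polynomial of degree `u`
divided by its normalizing factor. -/
noncomputable def wilsonCoeff (a b c d u : K) (k : ℕ) : K :=
  wilsonNum (a + b + c + d) u k / wilsonDen a b c d k

/-- The sum of the first `N` terms of the hypergeometric series defining the Wilson polynomials,
with a scalar degree `u`; for a natural number `u < N` it is the whole series. -/
noncomputable def wilsonPartialSum (a b c d u y : K) (N : ℕ) : K :=
  ∑ k ∈ Finset.range N, wilsonCoeff a b c d u k * wilsonBasis a y k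

/-- The Wilson polynomial `W_n` over a field, as a function of `y = x²`. -/
noncomputable def wilsonPolynomial (a b c d : K) (n : ℕ) (y : K) : K :=
  wilsonScale a b c d n * wilsonPartialSum a b c d n y (n + 1)

/-- The coefficient `A_u` of `S_u - S_{u+1}` in the recurrence of the partial sums. -/
def wilsonUp (a b c d u : K) : K :=
  (a + b + c + d + u - 1) * (a + b + u) * (a + c + u) * (a + d + u) /
    ((a + b + c + d + 2 * u) * (a + b + c + d + 2 * u - 1))

/-- The coefficient `C_u` of `S_u - S_{u-1}` in the recurrence of the partial sums. -/
def wilsonDown (a b c d u : K) : K :=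
  u * (b + c + u - 1) * (b + d + u - 1) * (c + d + u - 1) /
    ((a + b + c + d + 2 * u - 1) * (a + b + c + d + 2 * u - 2))

/-- Lagrange interpolation in `t` at the nodes `t = u` and `t = 1 - (a + b + c + d) - u`. -/
theorem prod_add_eq_interpolation (a b c d u t : K) (h : a + b + c + d + 2 * u - 1 ≠ 0) :
    (a + b + t) * (a + c + t) * (a + d + t) =
      (2 * a + t + 1) * ((t - u) * (u + (a + b + c + d) - 1 + t)) +
        ((a + b + u) * (a + c + u) * (a + d + u) * (u + (a + b + c + d) - 1 + t) +
          (b + c + u - 1) * (b + d + u - 1) * (c + d + u - 1) * (t - u)) /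
            (a + b + c + d + 2 * u - 1) := by
  rw [← sub_eq_iff_eq_add', eq_div_iff h]
  ring

theorem wilsonUp_mul_wilsonNum_sub (a b c d u : K) (k : ℕ) (h : a + b + c + d + 2 * u ≠ 0) :
    wilsonUp a b c d u * (wilsonNum (a + b + c + d) u (k + 1) -
        wilsonNum (a + b + c + d) (u + 1) (k + 1)) =
      (k + 1) * wilsonNum (a + b + c + d) u k *
        ((a + b + u) * (a + c + u) * (a + d + u) * (u + (a + b + c + d) - 1 + k) /
          (a + b + c + d + 2 * u - 1)) := by
  have hnum := wilsonNum_sub_wilsonNum_add_one (a + b + c + d) u k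
  rw [wilsonUp, div_mul_eq_mul_div, mul_div_assoc',
    ← mul_div_mul_left _ (a + b + c + d + 2 * u - 1) h]
  congr 1
  linear_combination (a + b + u) * (a + c + u) * (a + d + u) * hnum

theorem wilsonDown_mul_wilsonNum_sub (a b c d u : K) (k : ℕ)
    (h : a + b + c + d + 2 * u - 2 ≠ 0) :
    wilsonDown a b c d u * (wilsonNum (a + b + c + d) u (k + 1) -
        wilsonNum (a + b + c + d) (u - 1) (k + 1)) =
      (k + 1) * wilsonNum (a + b + c + d) u k *
        ((b + c + u - 1) * (b + d + u - 1) * (c + d + u - 1) * (k - u) /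
          (a + b + c + d + 2 * u - 1)) := by
  have hnum := wilsonNum_sub_wilsonNum_sub_one (a + b + c + d) u k
  rw [wilsonDown, div_mul_eq_mul_div, mul_div_assoc',
    ← mul_div_mul_right _ (a + b + c + d + 2 * u - 1) h]
  congr 1
  linear_combination (b + c + u - 1) * (b + d + u - 1) * (c + d + u - 1) * hnum

theorem wilsonCoeff_recurrence (a b c d u : K) (k : ℕ) (hden : wilsonDen a b c d (k + 1) ≠ 0)
    (h0 : a + b + c + d + 2 * u ≠ 0) (h1 : a + b + c + d + 2 * u - 1 ≠ 0)
    (h2 : a + b + c + d + 2 * u - 2 ≠ 0) :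
    wilsonCoeff a b c d u k =
      wilsonUp a b c d u *
          (wilsonCoeff a b c d u (k + 1) - wilsonCoeff a b c d (u + 1) (k + 1)) +
        wilsonDown a b c d u *
          (wilsonCoeff a b c d u (k + 1) - wilsonCoeff a b c d (u - 1) (k + 1)) +
        (k + 1) * (2 * a + k + 1) * wilsonCoeff a b c d u (k + 1) := by
  have hcoeff : wilsonCoeff a b c d u k = wilsonNum (a + b + c + d) u k *
      ((a + b + k) * (a + c + k) * (a + d + k) * (k + 1)) / wilsonDen a b c d (k + 1) := by
    rw [wilsonDen_succ] at hden ⊢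
    rw [mul_div_mul_right _ _ (right_ne_zero_of_mul hden), wilsonCoeff]
  rw [hcoeff, div_eq_iff hden, prod_add_eq_interpolation a b c d u k h1]
  simp only [wilsonCoeff, add_mul, mul_assoc, sub_mul, div_mul_cancel₀ _ hden]
  linear_combination -wilsonUp_mul_wilsonNum_sub a b c d u k h0 -
    wilsonDown_mul_wilsonNum_sub a b c d u k h2 -
    (k + 1) * (2 * a + k + 1) * wilsonNum_succ (a + b + c + d) u k

theorem wilsonPartialSum_succ (a b c d u y : K) (N : ℕ) :
    wilsonPartialSum a b c d u y (N + 1) =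
      wilsonPartialSum a b c d u y N + wilsonCoeff a b c d u N * wilsonBasis a y N :=
  Finset.sum_range_succ _ _

theorem wilsonPartialSum_one (a b c d u y : K) : wilsonPartialSum a b c d u y 1 = 1 := by
  simp [wilsonPartialSum, wilsonCoeff, wilsonNum, wilsonDen, wilsonScale, wilsonBasis]

theorem wilsonPartialSum_recurrence (a b c d u y : K) (N : ℕ) (hden : wilsonDen a b c d N ≠ 0)
    (h0 : a + b + c + d + 2 * u ≠ 0) (h1 : a + b + c + d + 2 * u - 1 ≠ 0)
    (h2 : a + b + c + d + 2 * u - 2 ≠ 0) :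
    (a ^ 2 + y) * wilsonPartialSum a b c d u y (N + 1) =
      wilsonUp a b c d u * (wilsonPartialSum a b c d u y (N + 1) -
          wilsonPartialSum a b c d (u + 1) y (N + 1)) +
        wilsonDown a b c d u * (wilsonPartialSum a b c d u y (N + 1) -
          wilsonPartialSum a b c d (u - 1) y (N + 1)) +
        wilsonCoeff a b c d u N * wilsonBasis a y (N + 1) := by
  induction N with
  | zero =>
    simp [wilsonPartialSum_one, wilsonCoeff, wilsonNum, wilsonDen, wilsonScale, wilsonBasis]
  | succ N ih =>
    have hden' : wilsonDen a b c d N ≠ 0 := by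
      rw [wilsonDen_succ] at hden
      exact left_ne_zero_of_mul hden
    have hbasis := wilsonBasis_succ a y (N + 1)
    push_cast at hbasis
    simp only [wilsonPartialSum_succ _ _ _ _ _ _ (N + 1)]
    linear_combination ih hden' - wilsonCoeff a b c d u (N + 1) * hbasis +
      wilsonBasis a y (N + 1) * wilsonCoeff_recurrence a b c d u N hden h0 h1 h2

theorem wilsonCoeff_natCast_eq_zero (a b c d : K) {n k : ℕ} (h : n < k) :
    wilsonCoeff a b c d n k = 0 := by
  rw [wilsonCoeff, wilsonNum_natCast_eq_zero _ h, zero_div]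

theorem wilsonPolynomial_eq_of_lt (a b c d y : K) {n N : ℕ} (h : n < N) :
    wilsonPolynomial a b c d n y =
      wilsonScale a b c d n * wilsonPartialSum a b c d n y N := by
  induction N, Nat.succ_le_of_lt h using Nat.le_induction with
  | base => rfl
  | succ N hN ih =>
    rw [wilsonPartialSum_succ, wilsonCoeff_natCast_eq_zero _ _ _ _ hN, zero_mul, add_zero,
      ih hN]

theorem wilsonScale_mul_wilsonUp (a b c d : K) (n : ℕ) :
    wilsonScale a b c d n * wilsonUp a b c d n =
      (a + b + c + d + n - 1) / ((a + b + c + d + 2 * n) * (a + b + c + d + 2 * n - 1)) *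
        wilsonScale a b c d (n + 1) := by
  rw [wilsonScale_succ, wilsonUp]
  ring

/-- The index `n - 1` is truncated at `n = 0`, where both sides vanish. -/
theorem wilsonScale_mul_wilsonDown_mul_wilsonPartialSum (a b c d y : K) {n N : ℕ} (h : n ≤ N) :
    wilsonScale a b c d n * wilsonDown a b c d n * wilsonPartialSum a b c d (n - 1) y N =
      (a + b + n - 1) * (a + c + n - 1) * (a + d + n - 1) * (b + c + n - 1) *
            (b + d + n - 1) * (c + d + n - 1) * n /
          ((a + b + c + d + 2 * n - 1) * (a + b + c + d + 2 * n - 2)) *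
        wilsonPolynomial a b c d (n - 1) y := by
  cases n with
  | zero => simp [wilsonDown]
  | succ m =>
    rw [Nat.add_sub_cancel, wilsonPolynomial_eq_of_lt a b c d y (Nat.lt_of_succ_le h),
      wilsonScale_succ, wilsonDown]
    push_cast
    simp only [← add_assoc, add_sub_cancel_right]
    ring

theorem wilsonUp_add_wilsonDown_sub_sq [NeZero (2 : K)] (a b c d u : K)
    (h0 : a + b + c + d + 2 * u ≠ 0) (h1 : a + b + c + d + 2 * u - 1 ≠ 0)
    (h2 : a + b + c + d + 2 * u - 2 ≠ 0) :
    wilsonUp a b c d u + wilsonDown a b c d u - a ^ 2 =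
      (4 * u ^ 2 - 4 * (1 - a - b - c - d) * u + (a + b + c + d) ^ 2 -
          2 * (a ^ 2 + b ^ 2 + c ^ 2 + d ^ 2)) / 8 +
        (a + b + c + d - 2) * (a + b - c - d) * (a + c - b - d) * (a + d - b - c) /
          (8 * (a + b + c + d + 2 * u) * (a + b + c + d + 2 * u - 2)) := by
  have h8 : (8 : K) ≠ 0 := by
    rw [show (8 : K) = 2 ^ 3 by norm_num]
    exact pow_ne_zero 3 two_ne_zero
  obtain ⟨X, rfl⟩ : ∃ X, u = (X - (a + b + c + d)) / 2 :=
    ⟨a + b + c + d + 2 * u, by rw [add_sub_cancel_left, mul_div_cancel_left₀ u two_ne_zero]⟩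
  rw [wilsonUp, wilsonDown]
  rw [mul_div_cancel₀ _ two_ne_zero, add_sub_cancel] at h0 h1 h2 ⊢
  field_simp
  ring

theorem wilson_three_term_general [CharZero K] (n : ℕ) (a b c d y : K)
    (hab : (ascPochhammer K (n + 1)).eval (a + b) ≠ 0)
    (hac : (ascPochhammer K (n + 1)).eval (a + c) ≠ 0)
    (had : (ascPochhammer K (n + 1)).eval (a + d) ≠ 0)
    (h0 : a + b + c + d + 2 * n ≠ 0) (h1 : a + b + c + d + 2 * n - 1 ≠ 0)
    (h2 : a + b + c + d + 2 * n - 2 ≠ 0) :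
    y * wilsonPolynomial a b c d n y =
      (-(a + b + c + d + n - 1) / ((a + b + c + d + 2 * n) * (a + b + c + d + 2 * n - 1))) *
          wilsonPolynomial a b c d (n + 1) y +
        ((4 * n ^ 2 - 4 * (1 - a - b - c - d) * n + (a + b + c + d) ^ 2 -
              2 * (a ^ 2 + b ^ 2 + c ^ 2 + d ^ 2)) / 8 +
            (a + b + c + d - 2) * (a + b - c - d) * (a + c - b - d) * (a + d - b - c) /
              (8 * (a + b + c + d + 2 * n) * (a + b + c + d + 2 * n - 2))) *
          wilsonPolynomial a b c d n y +
        (-(a + b + n - 1) * (a + c + n - 1) * (a + d + n - 1) * (b + c + n - 1) *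
              (b + d + n - 1) * (c + d + n - 1) * n /
            ((a + b + c + d + 2 * n - 1) * (a + b + c + d + 2 * n - 2))) *
          wilsonPolynomial a b c d (n - 1) y := by
  have hden : wilsonDen a b c d (n + 1) ≠ 0 :=
    mul_ne_zero (mul_ne_zero (mul_ne_zero hab hac) had)
      (Nat.cast_ne_zero.2 (n + 1).factorial_ne_zero)
  have hrec := wilsonPartialSum_recurrence a b c d n y (n + 1) hden h0 h1 h2
  rw [wilsonCoeff_natCast_eq_zero a b c d n.lt_succ_self, zero_mul, add_zero] at hrec
  rw [← wilsonUp_add_wilsonDown_sub_sq a b c d n h0 h1 h2,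
    wilsonPolynomial_eq_of_lt a b c d y (show n < n + 2 by lia),
    wilsonPolynomial_eq_of_lt a b c d y (show n + 1 < n + 2 by lia), Nat.cast_succ]
  linear_combination wilsonScale a b c d n * hrec -
    wilsonPartialSum a b c d (n + 1) y (n + 2) * wilsonScale_mul_wilsonUp a b c d n -
    wilsonScale_mul_wilsonDown_mul_wilsonPartialSum a b c d y (show n ≤ n + 2 by lia)

end Field

theorem wilson_eq_wilsonPolynomial (a b c d : ℝ) (n : ℕ) (x : ℝ) :
    wilson a b c d n x = wilsonPolynomial a b c d n (x ^ 2) := by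
  simp only [wilson, rf_eq_eval_ascPochhammer, wilsonPolynomial, wilsonScale, wilsonPartialSum,
    wilsonCoeff, wilsonNum, wilsonDen, wilsonBasis, add_assoc, div_mul_eq_mul_div]

theorem wilson_three_term (n : ℕ) (hn : 1 ≤ n) (a b c d x : ℝ)
    (hab : ∀ k ≤ n + 1, rf (a + b) k ≠ 0)
    (hac : ∀ k ≤ n + 1, rf (a + c) k ≠ 0)
    (had : ∀ k ≤ n + 1, rf (a + d) k ≠ 0)
    (h0 : a + b + c + d + 2 * n ≠ 0)
    (h1 : a + b + c + d + 2 * n + 1 ≠ 0)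
    (h2 : a + b + c + d + 2 * n - 1 ≠ 0)
    (h3 : a + b + c + d + 2 * n - 2 ≠ 0) :
    x ^ 2 * wilson a b c d n x =
      (-(a + b + c + d + n - 1) / ((a + b + c + d + 2 * n) * (a + b + c + d + 2 * n - 1))) *
          wilson a b c d (n + 1) x +
        ((4 * n ^ 2 - 4 * (1 - a - b - c - d) * n + (a + b + c + d) ^ 2 -
              2 * (a ^ 2 + b ^ 2 + c ^ 2 + d ^ 2)) / 8 +
            (a + b + c + d - 2) * (a + b - c - d) * (a + c - b - d) * (a + d - b - c) /
              (8 * (a + b + c + d + 2 * n) * (a + b + c + d + 2 * n - 2))) *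
          wilson a b c d n x +
        (-(a + b + n - 1) * (a + c + n - 1) * (a + d + n - 1) * (b + c + n - 1) *
              (b + d + n - 1) * (c + d + n - 1) * n /
            ((a + b + c + d + 2 * n - 1) * (a + b + c + d + 2 * n - 2))) *
          wilson a b c d (n - 1) x := by
  simp only [rf_eq_eval_ascPochhammer, wilson_eq_wilsonPolynomial] at hab hac had ⊢
  exact wilson_three_term_general n a b c d _ (hab _ le_rfl) (hac _ le_rfl) (had _ le_rfl) h0 h2 h3
end

section
/- For all natural numbers n ≥ 1 and real (or complex) parameters q, a, b, c, d with all stated denominators nonzero, the q-Racah polynomials R_n(μ(x)) with μ(x) = q^{−x} + c d q^{x+1} satisfy μ(x)·R_n(μ(x)) = α_n·R_{n+1}(μ(x)) + β_n·R_n(μ(x)) + γ_n·R_{n-1}(μ(x)), where α_n = (1−aq^{n+1})(1−abq^{n+1})(1−bdq^{n+1})(1−cq^{n+1})/((1−abq^{2n+1})(1−abq^{2n+2})), γ_n = q(1−q^n)(1−bq^n)(c−abq^n)(d−aq^n)/((1−abq^{2n})(1−abq^{2n+1})), and β_n = q^{n+1}(abq^{2n+1}+1)(c+bcd+dc+a+bd+ab+ca+abd)/((1−abq^{2n})(1−abq^{2n+2}))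 − q^{2n+1}(1+q)(ab²d+abcd+ca+bcd+abd+ab+abc+a²b)/((1−abq^{2n})(1−abq^{2n+2})). -/
/-- The q-shifted factorial `(a;q)_k = ∏_{j=0}^{k-1}(1 - a q^j)`. -/
noncomputable def qpoch (a q : ℝ) (k : ℕ) : ℝ := ∏ j ∈ Finset.range k, (1 - a * q ^ j)

/-- The q-Racah polynomials `R_n(μ(x))` with `μ(x) = q^{-x} + cd q^{x+1}` (real `x`, `q > 0`):
`R_n(μ(x)) = ∑_{k=0}^n ((q^{-n};q)_k (abq^{n+1};q)_k (q^{-x};q)_k (cdq^{x+1};q)_k) /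
  ((aq;q)_k (bdq;q)_k (cq;q)_k (q;q)_k) q^k`. -/
noncomputable def qRacah (q a b c d : ℝ) (n : ℕ) (x : ℝ) : ℝ :=
  ∑ k ∈ Finset.range (n + 1),
    qpoch (q ^ (-(n : ℤ))) q k * qpoch (a * b * q ^ (n + 1)) q k *
        qpoch (q ^ (-x)) q k * qpoch (c * d * q ^ (x + 1)) q k /
      (qpoch (a * q) q k * qpoch (b * d * q) q k * qpoch (c * q) q k * qpoch q q k) *
      q ^ k

/-! Write `φ_k = (X;q)_k (Y;q)_k` with `X Y = cdq`, so that `R_n = ∑ c_{n,k} φ_k` and `μ = X + Y`.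
The factor `(1 - X q^k)(1 - Y q^k)` depends on `X` and `Y` only through `X + Y` and `X Y`, hence
`μ - 1 - cdq` maps `φ_k` to a combination of `φ_k` and `φ_{k+1}`. Since `β_n = 1 + cdq - α_n - γ_n`,
the recurrence is
`(μ - 1 - cdq) R_n = α_n (R_{n+1} - R_n) + γ_n (R_{n-1} - R_n)`.
The differences of neighbouring coefficients factor and absorb `1 - abq^{2n+2}` and `1 - abq^{2n}`;
comparing coefficients of `φ_{k+1}` then leaves one identity of quadratic polynomials in `q^k`. -/

section QPochhammer

variable {R : Type*} [CommRing R]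

/-- The q-shifted factorial `(a;q)_k` over a commutative ring; `qpoch` is the case of `ℝ`. -/
def qPochhammer (a q : R) (k : ℕ) : R := ∏ j ∈ Finset.range k, (1 - a * q ^ j)

theorem qPochhammer_zero (a q : R) : qPochhammer a q 0 = 1 :=
  Finset.prod_range_zero _

theorem qPochhammer_succ (a q : R) (k : ℕ) :
    qPochhammer a q (k + 1) = qPochhammer a q k * (1 - a * q ^ k) :=
  Finset.prod_range_succ _ _

theorem qPochhammer_succ' (a q : R) (k : ℕ) :
    qPochhammer a q (k + 1) = (1 - a) * qPochhammer (a * q) q k := by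
  simp only [qPochhammer, Finset.prod_range_succ', pow_zero, mul_one, pow_succ', mul_assoc,
    mul_comm (1 - a)]

theorem one_sub_mul_qPochhammer_mul (a q : R) (k : ℕ) :
    (1 - a) * qPochhammer (a * q) q k = qPochhammer a q k * (1 - a * q ^ k) := by
  rw [← qPochhammer_succ', qPochhammer_succ]

theorem qPochhammer_mul_qPochhammer_sub (u v q : R) (k : ℕ) :
    qPochhammer u q (k + 1) * qPochhammer (v * q) q (k + 1) -
        qPochhammer (u * q) q (k + 1) * qPochhammer v q (k + 1) =
      (v - u) * (1 - q ^ (k + 1)) * (qPochhammer (u * q) q k * qPochhammer (v * q) q k) := by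
  rw [qPochhammer_succ' u, qPochhammer_succ' v, qPochhammer_succ (u * q),
    qPochhammer_succ (v * q)]
  ring

end QPochhammer

section QRacah

variable {K : Type*} [Field K]

theorem qPochhammer_inv_pow_eq_zero_of_lt {q : K} (hq : q ≠ 0) {n k : ℕ} (h : n < k) :
    qPochhammer (q ^ n)⁻¹ q k = 0 :=
  Finset.prod_eq_zero (Finset.mem_range.2 h) <| by
    rw [inv_mul_cancel₀ (pow_ne_zero n hq), sub_self]

theorem inv_pow_succ_mul_self {q : K} (hq : q ≠ 0) (n : ℕ) : (q ^ (n + 1))⁻¹ * q = (q ^ n)⁻¹ := by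
  rw [pow_succ, mul_inv, inv_mul_cancel_right₀ hq]

theorem add_sub_mul_qPochhammer_mul_qPochhammer {q : K} (hq : q ≠ 0) (X Y : K) (k : ℕ) :
    (X + Y - (1 + X * Y)) * (qPochhammer X q k * qPochhammer Y q k) =
      (q ^ k)⁻¹ * (1 - q ^ k) * (1 - X * Y * q ^ k) * (qPochhammer X q k * qPochhammer Y q k) -
        (q ^ k)⁻¹ * (qPochhammer X q (k + 1) * qPochhammer Y q (k + 1)) := by
  have hqk := pow_ne_zero k hq
  rw [qPochhammer_succ, qPochhammer_succ]
  field_simp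
  ring

theorem add_sub_mul_sum_qPochhammer {q : K} (hq : q ≠ 0) (X Y : K) {m : ℕ} {t : ℕ → K}
    (ht : t m = 0) :
    (X + Y - (1 + X * Y)) *
        ∑ k ∈ Finset.range (m + 1), t k * (qPochhammer X q k * qPochhammer Y q k) =
      ∑ k ∈ Finset.range m,
        ((q ^ (k + 1))⁻¹ * (1 - q ^ (k + 1)) * (1 - X * Y * q ^ (k + 1)) * t (k + 1) -
          (q ^ k)⁻¹ * t k) * (qPochhammer X q (k + 1) * qPochhammer Y q (k + 1)) := by
  have expand (k : ℕ) :
      (X + Y - (1 + X * Y)) * (t k * (qPochhammer X q k * qPochhammer Y q k)) =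
        (q ^ k)⁻¹ * (1 - q ^ k) * (1 - X * Y * q ^ k) * t k *
            (qPochhammer X q k * qPochhammer Y q k) -
          (q ^ k)⁻¹ * t k * (qPochhammer X q (k + 1) * qPochhammer Y q (k + 1)) := by
    linear_combination t k * add_sub_mul_qPochhammer_mul_qPochhammer hq X Y k
  simp only [Finset.mul_sum, expand, sub_mul _ _ (_ * _), Finset.sum_sub_distrib]
  rw [Finset.sum_range_succ', Finset.sum_range_succ _ m, ht]
  simp only [pow_zero, sub_self, mul_zero, zero_mul, add_zero]

/-- The factor `(q^{-n};q)_k (s q^{n+1};q)_k` of the coefficients of `R_n` that depends on `n`,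
where `s = ab`. -/
def qRacahNumer (q s : K) (n k : ℕ) : K :=
  qPochhammer (q ^ n)⁻¹ q k * qPochhammer (s * q ^ (n + 1)) q k

/-- The denominator `(aq;q)_k (bdq;q)_k (cq;q)_k (q;q)_k` of the coefficients of `R_n`. -/
def qRacahDenom (q a b c d : K) (k : ℕ) : K :=
  qPochhammer (a * q) q k * qPochhammer (b * d * q) q k * qPochhammer (c * q) q k *
    qPochhammer q q k

/-- The coefficient of `(q^{-x};q)_k (cdq^{x+1};q)_k` in the q-Racah polynomial `R_n`. -/
def qRacahCoeff (q a b c d : K) (n k : ℕ) : K :=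
  qRacahNumer q (a * b) n k / qRacahDenom q a b c d k * q ^ k

/-- The q-Racah polynomial `R_n` over a field, with `X` and `Y` in place of `q^{-x}` and
`cdq^{x+1}`, so that `μ = X + Y`. -/
def qRacahSum (q a b c d X Y : K) (n : ℕ) : K :=
  ∑ k ∈ Finset.range (n + 1),
    qRacahCoeff q a b c d n k * (qPochhammer X q k * qPochhammer Y q k)

/-- The coefficient `α_n` of `R_{n+1}` in the three-term recurrence. -/
def qRacahAlpha (q a b c d : K) (n : ℕ) : K :=
  (1 - a * q ^ (n + 1)) * (1 - a * b * q ^ (n + 1)) * (1 - b * d * q ^ (n + 1)) *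
      (1 - c * q ^ (n + 1)) /
    ((1 - a * b * q ^ (2 * n + 1)) * (1 - a * b * q ^ (2 * n + 2)))

/-- The coefficient `β_n` of `R_n` in the three-term recurrence. -/
def qRacahBeta (q a b c d : K) (n : ℕ) : K :=
  q ^ (n + 1) * (a * b * q ^ (2 * n + 1) + 1) *
        (c + b * c * d + d * c + a + b * d + a * b + c * a + a * b * d) /
      ((1 - a * b * q ^ (2 * n)) * (1 - a * b * q ^ (2 * n + 2))) -
    q ^ (2 * n + 1) * (1 + q) *
        (a * b ^ 2 * d + a * b * c * d + c * a + b * c * d + a * b * d + a * b +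
          a * b * c + a ^ 2 * b) /
      ((1 - a * b * q ^ (2 * n)) * (1 - a * b * q ^ (2 * n + 2)))

/-- The coefficient `γ_n` of `R_{n-1}` in the three-term recurrence. -/
def qRacahGamma (q a b c d : K) (n : ℕ) : K :=
  q * (1 - q ^ n) * (1 - b * q ^ n) * (c - a * b * q ^ n) * (d - a * q ^ n) /
    ((1 - a * b * q ^ (2 * n)) * (1 - a * b * q ^ (2 * n + 1)))

theorem qRacahNumer_zero_right (q s : K) (n : ℕ) : qRacahNumer q s n 0 = 1 := by
  simp only [qRacahNumer, qPochhammer_zero, mul_one]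

theorem qRacahNumer_succ_right (q s : K) (n k : ℕ) :
    qRacahNumer q s n (k + 1) =
      qRacahNumer q s n k * ((1 - (q ^ n)⁻¹ * q ^ k) * (1 - s * q ^ (n + 1) * q ^ k)) := by
  rw [qRacahNumer, qRacahNumer, qPochhammer_succ, qPochhammer_succ]
  ring

theorem qRacahNumer_eq_zero_of_lt {q : K} (hq : q ≠ 0) (s : K) {n k : ℕ} (h : n < k) :
    qRacahNumer q s n k = 0 := by
  rw [qRacahNumer, qPochhammer_inv_pow_eq_zero_of_lt hq h, zero_mul]

theorem qRacahNumer_succ_left_sub {q : K} (hq : q ≠ 0) (s : K) (n k : ℕ) :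
    qRacahNumer q s (n + 1) (k + 1) - qRacahNumer q s n (k + 1) =
      -((q ^ (n + 1))⁻¹ * (1 - s * q ^ (2 * n + 2)) * (1 - q ^ (k + 1)) *
        (qPochhammer (q ^ n)⁻¹ q k * qPochhammer (s * q ^ (n + 2)) q k)) := by
  have factored := qPochhammer_mul_qPochhammer_sub (q ^ (n + 1))⁻¹ (s * q ^ (n + 1)) q k
  rw [inv_pow_succ_mul_self hq, mul_assoc s, ← pow_succ] at factored
  have hsub : s * q ^ (n + 1) - (q ^ (n + 1))⁻¹ =
      -((q ^ (n + 1))⁻¹ * (1 - s * q ^ (2 * n + 2))) := by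
    field_simp
    ring
  rw [qRacahNumer, qRacahNumer, factored, hsub]
  ring

theorem one_sub_mul_qRacahNumer_succ_sub {q : K} (hq : q ≠ 0) (s : K) (n k : ℕ) :
    (1 - s * q ^ (n + 1)) * (qRacahNumer q s (n + 1) (k + 1) - qRacahNumer q s n (k + 1)) =
      -((q ^ (n + 1))⁻¹ * (1 - s * q ^ (2 * n + 2)) * (1 - q ^ (k + 1)) *
        (1 - s * q ^ (n + 1) * q ^ k) * qRacahNumer q s n k) := by
  have shift := one_sub_mul_qPochhammer_mul (s * q ^ (n + 1)) q k
  rw [mul_assoc s, ← pow_succ] at shift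
  rw [qRacahNumer_succ_left_sub hq, qRacahNumer]
  linear_combination -((q ^ (n + 1))⁻¹ * (1 - s * q ^ (2 * n + 2)) * (1 - q ^ (k + 1)) *
    qPochhammer (q ^ n)⁻¹ q k) * shift

theorem one_sub_mul_qRacahNumer_pred_sub {q : K} (hq : q ≠ 0) (s : K) (n k : ℕ) :
    (1 - q ^ n) * (qRacahNumer q s (n - 1) (k + 1) - qRacahNumer q s n (k + 1)) =
      -((1 - s * q ^ (2 * n)) * (1 - q ^ (k + 1)) * (1 - (q ^ n)⁻¹ * q ^ k) *
        qRacahNumer q s n k) := by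
  cases n with
  | zero =>
    have vanish : qPochhammer 1 q k * (1 - q ^ k) = 0 := by
      simpa using (one_sub_mul_qPochhammer_mul 1 q k).symm
    simp only [qRacahNumer, pow_zero, inv_one]
    linear_combination (1 - s) * (1 - q ^ (k + 1)) * qPochhammer (s * q ^ (0 + 1)) q k * vanish
  | succ n =>
    have shift := one_sub_mul_qPochhammer_mul (q ^ (n + 1))⁻¹ q k
    rw [inv_pow_succ_mul_self hq] at shift
    have hinv : (q ^ (n + 1))⁻¹ * q ^ (n + 1) = 1 := inv_mul_cancel₀ (pow_ne_zero _ hq)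
    rw [Nat.add_sub_cancel, ← neg_sub (qRacahNumer q s (n + 1) (k + 1)),
      qRacahNumer_succ_left_sub hq, qRacahNumer]
    linear_combination (1 - s * q ^ (2 * n + 2)) * (1 - q ^ (k + 1)) *
      qPochhammer (s * q ^ (n + 2)) q k *
        (-shift + (-qPochhammer (q ^ n)⁻¹ q k) * hinv)

theorem qRacahDenom_succ (q a b c d : K) (k : ℕ) :
    qRacahDenom q a b c d (k + 1) = qRacahDenom q a b c d k *
      ((1 - a * q ^ (k + 1)) * (1 - b * d * q ^ (k + 1)) * (1 - c * q ^ (k + 1)) *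
        (1 - q ^ (k + 1))) := by
  simp only [qRacahDenom, qPochhammer_succ]
  ring

theorem qRacahDenom_ne_zero_of_le {q a b c d : K} {k m : ℕ} (h : k ≤ m)
    (hm : qRacahDenom q a b c d m ≠ 0) : qRacahDenom q a b c d k ≠ 0 := by
  induction m, h using Nat.le_induction with
  | base => exact hm
  | succ m _ ih => exact ih (left_ne_zero_of_mul (qRacahDenom_succ q a b c d m ▸ hm))

theorem qRacahCoeff_zero_right (q a b c d : K) (n : ℕ) : qRacahCoeff q a b c d n 0 = 1 := by
  simp [qRacahCoeff, qRacahNumer_zero_right, qRacahDenom, qPochhammer_zero]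

theorem qRacahCoeff_eq_zero_of_lt {q : K} (hq : q ≠ 0) (a b c d : K) {n k : ℕ} (h : n < k) :
    qRacahCoeff q a b c d n k = 0 := by
  rw [qRacahCoeff, qRacahNumer_eq_zero_of_lt hq _ h, zero_div, zero_mul]

theorem qRacahCoeff_eq_div_qRacahDenom_succ {q a b c d : K} {k : ℕ}
    (hD : qRacahDenom q a b c d (k + 1) ≠ 0) (n : ℕ) :
    qRacahCoeff q a b c d n k = qRacahNumer q (a * b) n k / qRacahDenom q a b c d (k + 1) * q ^ k *
      ((1 - a * q ^ (k + 1)) * (1 - b * d * q ^ (k + 1)) * (1 - c * q ^ (k + 1)) *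
        (1 - q ^ (k + 1))) := by
  rw [qRacahDenom_succ] at hD ⊢
  rw [qRacahCoeff, ← mul_div_mul_right _ _ (right_ne_zero_of_mul hD)]
  ring

theorem qRacahAlpha_mul_qRacahNumer_sub {q a b : K} (hq : q ≠ 0) (c d : K) {n : ℕ}
    (h2 : 1 - a * b * q ^ (2 * n + 2) ≠ 0) (k : ℕ) :
    qRacahAlpha q a b c d n *
        (qRacahNumer q (a * b) (n + 1) (k + 1) - qRacahNumer q (a * b) n (k + 1)) =
      -((1 - a * q ^ (n + 1)) * (1 - b * d * q ^ (n + 1)) * (1 - c * q ^ (n + 1)) *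
        (1 - a * b * q ^ (n + 1) * q ^ k) / (q ^ (n + 1) * (1 - a * b * q ^ (2 * n + 1)))) *
        ((1 - q ^ (k + 1)) * qRacahNumer q (a * b) n k) := by
  have diff := one_sub_mul_qRacahNumer_succ_sub hq (a * b) n k
  have cancel := mul_inv_cancel₀ h2
  simp only [qRacahAlpha, div_eq_mul_inv, mul_inv]
  linear_combination (1 - a * q ^ (n + 1)) * (1 - b * d * q ^ (n + 1)) * (1 - c * q ^ (n + 1)) *
    (1 - a * b * q ^ (2 * n + 1))⁻¹ * ((1 - a * b * q ^ (2 * n + 2))⁻¹ * diff -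
      (q ^ (n + 1))⁻¹ * (1 - q ^ (k + 1)) * (1 - a * b * q ^ (n + 1) * q ^ k) *
        qRacahNumer q (a * b) n k * cancel)

theorem qRacahGamma_mul_qRacahNumer_sub {q a b : K} (hq : q ≠ 0) (c d : K) {n : ℕ}
    (h0 : 1 - a * b * q ^ (2 * n) ≠ 0) (k : ℕ) :
    qRacahGamma q a b c d n *
        (qRacahNumer q (a * b) (n - 1) (k + 1) - qRacahNumer q (a * b) n (k + 1)) =
      -(q * (1 - b * q ^ n) * (c - a * b * q ^ n) * (d - a * q ^ n) *
        (1 - (q ^ n)⁻¹ * q ^ k) / (1 - a * b * q ^ (2 * n + 1))) *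
        ((1 - q ^ (k + 1)) * qRacahNumer q (a * b) n k) := by
  have diff := one_sub_mul_qRacahNumer_pred_sub hq (a * b) n k
  have cancel := mul_inv_cancel₀ h0
  simp only [qRacahGamma, div_eq_mul_inv, mul_inv]
  linear_combination q * (1 - b * q ^ n) * (c - a * b * q ^ n) * (d - a * q ^ n) *
    (1 - a * b * q ^ (2 * n + 1))⁻¹ * ((1 - a * b * q ^ (2 * n))⁻¹ * diff -
      (1 - q ^ (k + 1)) * (1 - (q ^ n)⁻¹ * q ^ k) * qRacahNumer q (a * b) n k * cancel)

-- The cubic terms in `q ^ k` on the left cancel, so both sides are quadratic in `q ^ k`; for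
-- generic parameters they agree at `0`, at `q ^ n` and at `(a * b * q ^ (n + 1))⁻¹`.
theorem qRacah_interpolation_identity {q a b : K} (hq : q ≠ 0) (c d : K) {n : ℕ}
    (h1 : 1 - a * b * q ^ (2 * n + 1) ≠ 0) (k : ℕ) :
    (1 - c * d * q * q ^ (k + 1)) *
          ((1 - (q ^ n)⁻¹ * q ^ k) * (1 - a * b * q ^ (n + 1) * q ^ k)) -
        (1 - a * q ^ (k + 1)) * (1 - b * d * q ^ (k + 1)) * (1 - c * q ^ (k + 1)) =
      q ^ (k + 1) *
        (-((1 - a * q ^ (n + 1)) * (1 - b * d * q ^ (n + 1)) * (1 - c * q ^ (n + 1)) *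
          (1 - a * b * q ^ (n + 1) * q ^ k) / (q ^ (n + 1) * (1 - a * b * q ^ (2 * n + 1)))) -
        q * (1 - b * q ^ n) * (c - a * b * q ^ n) * (d - a * q ^ n) *
          (1 - (q ^ n)⁻¹ * q ^ k) / (1 - a * b * q ^ (2 * n + 1))) := by
  field_simp
  ring

theorem qRacahCoeff_three_term {q a b c d : K} (hq : q ≠ 0) {n k : ℕ}
    (hD : qRacahDenom q a b c d (k + 1) ≠ 0) (h0 : 1 - a * b * q ^ (2 * n) ≠ 0)
    (h1 : 1 - a * b * q ^ (2 * n + 1) ≠ 0) (h2 : 1 - a * b * q ^ (2 * n + 2) ≠ 0) :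
    (q ^ (k + 1))⁻¹ * (1 - q ^ (k + 1)) * (1 - c * d * q * q ^ (k + 1)) *
          qRacahCoeff q a b c d n (k + 1) - (q ^ k)⁻¹ * qRacahCoeff q a b c d n k =
      qRacahAlpha q a b c d n *
          (qRacahCoeff q a b c d (n + 1) (k + 1) - qRacahCoeff q a b c d n (k + 1)) +
        qRacahGamma q a b c d n *
          (qRacahCoeff q a b c d (n - 1) (k + 1) - qRacahCoeff q a b c d n (k + 1)) := by
  have hinv (m : ℕ) : (q ^ m)⁻¹ * q ^ m = 1 := inv_mul_cancel₀ (pow_ne_zero m hq)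
  calc
    _ = (1 - q ^ (k + 1)) * qRacahNumer q (a * b) n k / qRacahDenom q a b c d (k + 1) *
          ((1 - c * d * q * q ^ (k + 1)) *
              ((1 - (q ^ n)⁻¹ * q ^ k) * (1 - a * b * q ^ (n + 1) * q ^ k)) -
            (1 - a * q ^ (k + 1)) * (1 - b * d * q ^ (k + 1)) * (1 - c * q ^ (k + 1))) := by
      rw [qRacahCoeff_eq_div_qRacahDenom_succ hD n, qRacahCoeff, qRacahNumer_succ_right]
      linear_combination (1 - q ^ (k + 1)) * qRacahNumer q (a * b) n k /
        qRacahDenom q a b c d (k + 1) *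
          ((1 - c * d * q * q ^ (k + 1)) *
              ((1 - (q ^ n)⁻¹ * q ^ k) * (1 - a * b * q ^ (n + 1) * q ^ k)) * hinv (k + 1) -
            (1 - a * q ^ (k + 1)) * (1 - b * d * q ^ (k + 1)) * (1 - c * q ^ (k + 1)) * hinv k)
    _ = (qRacahAlpha q a b c d n *
            (qRacahNumer q (a * b) (n + 1) (k + 1) - qRacahNumer q (a * b) n (k + 1)) +
          qRacahGamma q a b c d n *
            (qRacahNumer q (a * b) (n - 1) (k + 1) - qRacahNumer q (a * b) n (k + 1))) /
        qRacahDenom q a b c d (k + 1) * q ^ (k + 1) := by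
      rw [qRacah_interpolation_identity hq c d h1 k, qRacahAlpha_mul_qRacahNumer_sub hq c d h2 k,
        qRacahGamma_mul_qRacahNumer_sub hq c d h0 k]
      ring
    _ = _ := by
      simp only [qRacahCoeff]
      ring

theorem qRacahBeta_eq {q a b : K} (c d : K) {n : ℕ} (h0 : 1 - a * b * q ^ (2 * n) ≠ 0)
    (h1 : 1 - a * b * q ^ (2 * n + 1) ≠ 0) (h2 : 1 - a * b * q ^ (2 * n + 2) ≠ 0) :
    qRacahBeta q a b c d n =
      1 + c * d * q - qRacahAlpha q a b c d n - qRacahGamma q a b c d n := by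
  rw [qRacahAlpha, qRacahBeta, qRacahGamma]
  field_simp
  ring

theorem qRacahSum_eq_sum_range {q : K} (hq : q ≠ 0) (a b c d X Y : K) {n m : ℕ} (h : n ≤ m) :
    qRacahSum q a b c d X Y n = ∑ k ∈ Finset.range (m + 1),
      qRacahCoeff q a b c d n k * (qPochhammer X q k * qPochhammer Y q k) := by
  refine Finset.sum_subset (Finset.range_mono (Nat.succ_le_succ h)) fun k _ hk => ?_
  rw [qRacahCoeff_eq_zero_of_lt hq a b c d (by simpa using hk), zero_mul]

theorem qRacahSum_sub {q : K} (hq : q ≠ 0) (a b c d X Y : K) {n n' m : ℕ} (h : n ≤ m)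
    (h' : n' ≤ m) :
    qRacahSum q a b c d X Y n' - qRacahSum q a b c d X Y n = ∑ k ∈ Finset.range m,
      (qRacahCoeff q a b c d n' (k + 1) - qRacahCoeff q a b c d n (k + 1)) *
        (qPochhammer X q (k + 1) * qPochhammer Y q (k + 1)) := by
  rw [qRacahSum_eq_sum_range hq a b c d X Y h, qRacahSum_eq_sum_range hq a b c d X Y h',
    ← Finset.sum_sub_distrib, Finset.sum_range_succ', qRacahCoeff_zero_right,
    qRacahCoeff_zero_right, sub_self, add_zero]
  exact Finset.sum_congr rfl fun k _ => (sub_mul _ _ _).symm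

theorem add_sub_mul_qRacahSum {q a b c d X Y : K} (hq : q ≠ 0) (hXY : X * Y = c * d * q)
    {n : ℕ} (hD : qRacahDenom q a b c d (n + 1) ≠ 0) (h0 : 1 - a * b * q ^ (2 * n) ≠ 0)
    (h1 : 1 - a * b * q ^ (2 * n + 1) ≠ 0) (h2 : 1 - a * b * q ^ (2 * n + 2) ≠ 0) :
    (X + Y - (1 + X * Y)) * qRacahSum q a b c d X Y n =
      qRacahAlpha q a b c d n *
          (qRacahSum q a b c d X Y (n + 1) - qRacahSum q a b c d X Y n) +
        qRacahGamma q a b c d n *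
          (qRacahSum q a b c d X Y (n - 1) - qRacahSum q a b c d X Y n) := by
  rw [qRacahSum_sub hq a b c d X Y n.le_succ le_rfl,
    qRacahSum_sub hq a b c d X Y n.le_succ ((n.sub_le 1).trans n.le_succ),
    qRacahSum_eq_sum_range hq a b c d X Y n.le_succ,
    add_sub_mul_sum_qPochhammer hq X Y (qRacahCoeff_eq_zero_of_lt hq a b c d n.lt_succ_self),
    Finset.mul_sum, Finset.mul_sum, ← Finset.sum_add_distrib]
  refine Finset.sum_congr rfl fun k hk => ?_
  have hDk := qRacahDenom_ne_zero_of_le (Finset.mem_range.1 hk) hD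
  rw [hXY, qRacahCoeff_three_term hq hDk h0 h1 h2]
  ring

-- At `n = 0` the truncated `n - 1` is harmless, because `γ_0 = 0`.
theorem qRacah_three_term_general {q a b c d X Y : K} (hq : q ≠ 0) (hXY : X * Y = c * d * q)
    {n : ℕ} (haq : qPochhammer (a * q) q (n + 1) ≠ 0)
    (hbdq : qPochhammer (b * d * q) q (n + 1) ≠ 0) (hcq : qPochhammer (c * q) q (n + 1) ≠ 0)
    (hqq : qPochhammer q q (n + 1) ≠ 0) (h0 : 1 - a * b * q ^ (2 * n) ≠ 0)
    (h1 : 1 - a * b * q ^ (2 * n + 1) ≠ 0) (h2 : 1 - a * b * q ^ (2 * n + 2) ≠ 0) :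
    (X + Y) * qRacahSum q a b c d X Y n =
      qRacahAlpha q a b c d n * qRacahSum q a b c d X Y (n + 1) +
        qRacahBeta q a b c d n * qRacahSum q a b c d X Y n +
        qRacahGamma q a b c d n * qRacahSum q a b c d X Y (n - 1) := by
  have hD : qRacahDenom q a b c d (n + 1) ≠ 0 :=
    mul_ne_zero (mul_ne_zero (mul_ne_zero haq hbdq) hcq) hqq
  have hdiff := add_sub_mul_qRacahSum hq hXY hD h0 h1 h2
  rw [qRacahBeta_eq c d h0 h1 h2, ← hXY]
  linear_combination hdiff

end QRacah

theorem qRacah_eq_qRacahSum (q a b c d : ℝ) (n : ℕ) (x : ℝ) :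
    qRacah q a b c d n x = qRacahSum q a b c d (q ^ (-x)) (c * d * q ^ (x + 1)) n := by
  refine Finset.sum_congr rfl fun k _ => ?_
  rw [zpow_neg, zpow_natCast]
  change _ = qpoch _ q k * qpoch _ q k / (qpoch _ q k * qpoch _ q k * qpoch _ q k * qpoch q q k) *
    q ^ k * (qpoch _ q k * qpoch _ q k)
  ring

theorem rpow_neg_mul_rpow_add_one {q : ℝ} (hq : 0 < q) (c d x : ℝ) :
    q ^ (-x) * (c * d * q ^ (x + 1)) = c * d * q := by
  rw [mul_left_comm, ← Real.rpow_add hq, neg_add_cancel_left, Real.rpow_one]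

theorem qRacah_three_term (n : ℕ) (hn : 1 ≤ n) (q a b c d : ℝ) (hq : 0 < q) (x : ℝ)
    (haq : ∀ k ≤ n + 1, qpoch (a * q) q k ≠ 0)
    (hbdq : ∀ k ≤ n + 1, qpoch (b * d * q) q k ≠ 0)
    (hcq : ∀ k ≤ n + 1, qpoch (c * q) q k ≠ 0)
    (hqq : ∀ k ≤ n + 1, qpoch q q k ≠ 0)
    (h0 : 1 - a * b * q ^ (2 * n) ≠ 0)
    (h1 : 1 - a * b * q ^ (2 * n + 1) ≠ 0)
    (h2 : 1 - a * b * q ^ (2 * n + 2) ≠ 0) :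
    (q ^ (-x) + c * d * q ^ (x + 1)) * qRacah q a b c d n x =
      ((1 - a * q ^ (n + 1)) * (1 - a * b * q ^ (n + 1)) * (1 - b * d * q ^ (n + 1)) *
            (1 - c * q ^ (n + 1)) /
          ((1 - a * b * q ^ (2 * n + 1)) * (1 - a * b * q ^ (2 * n + 2)))) *
          qRacah q a b c d (n + 1) x +
        (q ^ (n + 1) * (a * b * q ^ (2 * n + 1) + 1) *
              (c + b * c * d + d * c + a + b * d + a * b + c * a + a * b * d) /
            ((1 - a * b * q ^ (2 * n)) * (1 - a * b * q ^ (2 * n + 2))) -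
          q ^ (2 * n + 1) * (1 + q) *
              (a * b ^ 2 * d + a * b * c * d + c * a + b * c * d + a * b * d + a * b +
                a * b * c + a ^ 2 * b) /
            ((1 - a * b * q ^ (2 * n)) * (1 - a * b * q ^ (2 * n + 2)))) *
          qRacah q a b c d n x +
        (q * (1 - q ^ n) * (1 - b * q ^ n) * (c - a * b * q ^ n) * (d - a * q ^ n) /
            ((1 - a * b * q ^ (2 * n)) * (1 - a * b * q ^ (2 * n + 1)))) *
          qRacah q a b c d (n - 1) x := by
  simp only [qRacah_eq_qRacahSum]
  exact qRacah_three_term_general hq.ne' (rpow_neg_mul_rpow_add_one hq c d x) (haq _ le_rfl)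
    (hbdq _ le_rfl) (hcq _ le_rfl) (hqq _ le_rfl) h0 h1 h2
end
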